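/- arXiv:1411.7798 — 3 statements merged into one kernel-verified Lean document; each statement's English description precedes it below -/
import Mathlib

section
/- (Generic IRLS decrease) Let I be a finite index set, E any set, c_i ≥ 0 nonnegative reals, g_i : E → ℝ^{k_i} arbitrary maps, and f : E → ℝ an arbitrary function. Suppose U' ∈ E satisfies g_i(U') ≠ 0 for every i ∈ I, and set the weights p_i = 1/‖g_i(U')‖₂. If U ∈ E satisfies f(U) + (1/2)·Σ_i c_i p_i ‖g_i(U)‖₂² ≤ f(U') + (1/2)·Σ_i c_i p_i ‖g_i(U')‖₂², then f(U) + Σ_i c_i ‖g_i(U)‖₂ ≤ f(U') + Σ_i c_i ‖g_i(U')‖₂. -/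
/-- The quadratic `a ↦ (1/2) c a² / b` majorizes `a ↦ c a` up to a constant, with equality at
`a = b`; the gap is `c (a - b)² / (2 b)`. -/
theorem irls_majorize {c a b : ℝ} (hc : 0 ≤ c) (hb : 0 < b) :
    c * a - c * b ≤ (1 / 2) * (c * (1 / b) * a ^ 2) - (1 / 2) * (c * (1 / b) * b ^ 2) := by
  have h : (1 / 2) * (c * (1 / b) * a ^ 2) - (1 / 2) * (c * (1 / b) * b ^ 2) - (c * a - c * b)
      = c * (a - b) ^ 2 / (2 * b) := by
    field_simp
    ring
  have h' : 0 ≤ c * (a - b) ^ 2 / (2 * b) := by positivity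
  linarith

/-- Generic IRLS decrease lemma: with weights `p_i = 1/‖g_i(U')‖₂` (where
`g_i(U') ≠ 0`), any `U` whose reweighted quadratic surrogate value
`f(U) + (1/2)·∑_i c_i p_i ‖g_i(U)‖₂²` does not exceed that of `U'` also satisfies
`f(U) + ∑_i c_i ‖g_i(U)‖₂ ≤ f(U') + ∑_i c_i ‖g_i(U')‖₂`. -/
theorem stmt_9 {I : Type*} [Fintype I] {E : Type*} (k : I → ℕ)
    (c : I → ℝ) (hc : ∀ i, 0 ≤ c i)
    (g : (i : I) → E → EuclideanSpace ℝ (Fin (k i))) (f : E → ℝ)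
    (U' U : E) (hg : ∀ i, g i U' ≠ 0)
    (h : f U + (1 / 2) * ∑ i, c i * (1 / ‖g i U'‖) * ‖g i U‖ ^ 2 ≤
         f U' + (1 / 2) * ∑ i, c i * (1 / ‖g i U'‖) * ‖g i U'‖ ^ 2) :
    f U + ∑ i, c i * ‖g i U‖ ≤ f U' + ∑ i, c i * ‖g i U'‖ := by
  have key := Finset.sum_le_sum fun i (_ : i ∈ Finset.univ) =>
    irls_majorize (a := ‖g i U‖) (hc i) (norm_pos_iff.mpr (hg i))
  simp only [Finset.sum_sub_distrib, ← Finset.mul_sum] at key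
  linarith
end

section
/- Fix X_A ∈ ℝ^{d_A×n} with columns x_i^A, X_B ∈ ℝ^{d_B×n} with columns x_i^B, Y ∈ ℝ^{c×n}, weights w_{ij} ≥ 0, and λ₁, λ₂ ≥ 0, and let F(U_A, U_B) = Σ_{I∈{A,B}}‖U_IᵀX_I − Y‖_F² + λ₁·Σ_{I,i,j} w_{ij}‖U_Iᵀ(x_i^I − x_j^I)‖₂ + λ₂·Σ_{i=1}^n ‖U_Aᵀx_i^A − U_Bᵀx_i^B‖₂. Let (U_A', U_B') be such that U_I'ᵀ(x_i^I − x_j^I) ≠ 0 whenever w_{ij} > 0 and U_A'ᵀx_i^A − U_B'ᵀx_i^B ≠ 0 for all i; define weights p_{ij}^I = 1/‖U_I'ᵀ(x_i^I − x_j^I)‖₂ and q_i = 1/‖U_A'ᵀx_i^A − U_B'ᵀx_i^B‖₂, and the half-quadratic augmented objective J(U_A, U_B) = Σ_{I}‖U_IᵀX_I − Y‖_F² + (λ₁/2)·Σ_{I,i,j} w_{ij} p_{ij}^I ‖U_Iᵀ(x_i^I − x_j^I)‖₂² + (λ₂/2)·Σ_i q_i ‖U_Aᵀx_i^A − U_Bᵀx_i^B‖₂².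 Then every pair (U_A, U_B) with J(U_A, U_B) ≤ J(U_A', U_B') satisfies F(U_A, U_B) ≤ F(U_A', U_B'). In particular, any minimizer of J over (U_A, U_B) does not increase F, so the reweighted iteration monotonically decreases the objective F (the decrease part of Proposition 1). -/
/-!
The augmented objective majorises `F` up to a constant, with equality at the base point: since
`(a - b) ^ 2 ≥ 0`, for `b > 0` one has `a - b ≤ (a ^ 2 / b - b ^ 2 / b) / 2`
(`weighted_sub_le`). Summing this over the norm terms of `F`, with `a` the norm at `(U_A, U_B)` and
`b` the norm at `(U_A', U_B')`, gives `F(U) - F(U') ≤ J(U) - J(U')`; the Frobenius terms cancel.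
-/

open Matrix

/-- Squared Frobenius norm of a real matrix: `‖M‖_F² = ∑ i j, M i j ^ 2`. -/
def frobSq {n m : ℕ} (M : Matrix (Fin n) (Fin m) ℝ) : ℝ :=
  ∑ i, ∑ j, (M i j) ^ 2

/-- Euclidean norm of a real vector: `‖v‖₂ = √(∑ i, v i ^ 2)`. -/
noncomputable def eNorm {m : ℕ} (v : Fin m → ℝ) : ℝ :=
  Real.sqrt (∑ i, (v i) ^ 2)

/-- The cross-modal matching objective (9) of the paper:
`F(U_A,U_B) = ∑_I ‖U_IᵀX_I − Y‖_F² + λ₁·∑_{I,i,j} w_{ij}‖U_Iᵀ(x_i^I − x_j^I)‖₂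
  + λ₂·∑_i ‖U_Aᵀx_i^A − U_Bᵀx_i^B‖₂`
(the last sum is `‖X_AᵀU_A − X_BᵀU_B‖_{21}`). -/
noncomputable def Fobj {dA dB n c : ℕ}
    (XA : Matrix (Fin dA) (Fin n) ℝ) (XB : Matrix (Fin dB) (Fin n) ℝ)
    (Y : Matrix (Fin c) (Fin n) ℝ) (w : Fin n → Fin n → ℝ) (lam1 lam2 : ℝ)
    (UA : Matrix (Fin dA) (Fin c) ℝ) (UB : Matrix (Fin dB) (Fin c) ℝ) : ℝ :=
  frobSq (UAᵀ * XA - Y) + frobSq (UBᵀ * XB - Y) +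
    lam1 * ((∑ i, ∑ j, w i j * eNorm (UAᵀ.mulVec (fun r => XA r i - XA r j))) +
            (∑ i, ∑ j, w i j * eNorm (UBᵀ.mulVec (fun r => XB r i - XB r j)))) +
    lam2 * ∑ i, eNorm
      (UAᵀ.mulVec (fun r => XA r i) - UBᵀ.mulVec (fun r => XB r i))

/-- The half-quadratic augmented objective with weights
`p_{ij}^I = 1/‖U_I'ᵀ(x_i^I − x_j^I)‖₂`, `q_i = 1/‖U_A'ᵀx_i^A − U_B'ᵀx_i^B‖₂`:
`J(U_A,U_B) = ∑_I ‖U_IᵀX_I − Y‖_F²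
  + (λ₁/2)·∑_{I,i,j} w_{ij} p_{ij}^I ‖U_Iᵀ(x_i^I − x_j^I)‖₂²
  + (λ₂/2)·∑_i q_i ‖U_Aᵀx_i^A − U_Bᵀx_i^B‖₂²`. -/
noncomputable def Jobj {dA dB n c : ℕ}
    (XA : Matrix (Fin dA) (Fin n) ℝ) (XB : Matrix (Fin dB) (Fin n) ℝ)
    (Y : Matrix (Fin c) (Fin n) ℝ) (w : Fin n → Fin n → ℝ) (lam1 lam2 : ℝ)
    (UA' : Matrix (Fin dA) (Fin c) ℝ) (UB' : Matrix (Fin dB) (Fin c) ℝ)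
    (UA : Matrix (Fin dA) (Fin c) ℝ) (UB : Matrix (Fin dB) (Fin c) ℝ) : ℝ :=
  frobSq (UAᵀ * XA - Y) + frobSq (UBᵀ * XB - Y) +
    (lam1 / 2) *
      ((∑ i, ∑ j, w i j * (1 / eNorm (UA'ᵀ.mulVec (fun r => XA r i - XA r j))) *
          eNorm (UAᵀ.mulVec (fun r => XA r i - XA r j)) ^ 2) +
       (∑ i, ∑ j, w i j * (1 / eNorm (UB'ᵀ.mulVec (fun r => XB r i - XB r j))) *
          eNorm (UBᵀ.mulVec (fun r => XB r i - XB r j)) ^ 2)) +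
    (lam2 / 2) *
      ∑ i, (1 / eNorm (UA'ᵀ.mulVec (fun r => XA r i) -
                UB'ᵀ.mulVec (fun r => XB r i))) *
        eNorm (UAᵀ.mulVec (fun r => XA r i) - UBᵀ.mulVec (fun r => XB r i)) ^ 2

theorem eNorm_pos {m : ℕ} {v : Fin m → ℝ} (hv : v ≠ 0) : 0 < eNorm v := by
  obtain ⟨i, hi⟩ := Function.ne_iff.mp hv
  exact Real.sqrt_pos.mpr (Finset.sum_pos' (fun j _ => sq_nonneg (v j))
    ⟨i, Finset.mem_univ i, sq_pos_iff.mpr hi⟩)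

/-- The quadratic majorisation of `a ↦ a` at `b`, scaled by a weight `w`; positivity of `b` is only
needed where the weight is nonzero. -/
theorem weighted_sub_le {w a b : ℝ} (hw : 0 ≤ w) (hb : 0 < w → 0 < b) :
    w * a - w * b ≤ (w * (1 / b) * a ^ 2 - w * (1 / b) * b ^ 2) / 2 := by
  rcases hw.eq_or_lt with rfl | hpos
  · simp
  · have hb' := hb hpos
    have key : (w * (1 / b) * a ^ 2 - w * (1 / b) * b ^ 2) / 2 - (w * a - w * b)
        = w * (1 / b) * (a - b) ^ 2 / 2 := by
      field_simp
      ring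
    have : 0 ≤ w * (1 / b) * (a - b) ^ 2 / 2 := by positivity
    linarith

theorem sum_weighted_sub_le {ι : Type*} [Fintype ι] {w a b : ι → ℝ} (hw : ∀ i, 0 ≤ w i)
    (hb : ∀ i, 0 < w i → 0 < b i) :
    ∑ i, w i * a i - ∑ i, w i * b i ≤
      (∑ i, w i * (1 / b i) * a i ^ 2 - ∑ i, w i * (1 / b i) * b i ^ 2) / 2 := by
  rw [← Finset.sum_sub_distrib, ← Finset.sum_sub_distrib, Finset.sum_div]
  exact Finset.sum_le_sum fun i _ => weighted_sub_le (hw i) (hb i)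

theorem sum_sum_weighted_sub_le {ι κ : Type*} [Fintype ι] [Fintype κ] {w a b : ι → κ → ℝ}
    (hw : ∀ i j, 0 ≤ w i j) (hb : ∀ i j, 0 < w i j → 0 < b i j) :
    ∑ i, ∑ j, w i j * a i j - ∑ i, ∑ j, w i j * b i j ≤
      (∑ i, ∑ j, w i j * (1 / b i j) * a i j ^ 2 -
        ∑ i, ∑ j, w i j * (1 / b i j) * b i j ^ 2) / 2 := by
  rw [← Finset.sum_sub_distrib, ← Finset.sum_sub_distrib, Finset.sum_div]
  exact Finset.sum_le_sum fun i _ => sum_weighted_sub_le (hw i) (hb i)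

/-- Monotone decrease of the reweighted iteration (the decrease part of
Proposition 1): every `(U_A, U_B)` with `J(U_A,U_B) ≤ J(U_A',U_B')` satisfies
`F(U_A,U_B) ≤ F(U_A',U_B')`. -/
theorem stmt_10 (dA dB n c : ℕ)
    (XA : Matrix (Fin dA) (Fin n) ℝ) (XB : Matrix (Fin dB) (Fin n) ℝ)
    (Y : Matrix (Fin c) (Fin n) ℝ) (w : Fin n → Fin n → ℝ)
    (hw : ∀ i j, 0 ≤ w i j) (lam1 lam2 : ℝ) (h1 : 0 ≤ lam1) (h2 : 0 ≤ lam2)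
    (UA' : Matrix (Fin dA) (Fin c) ℝ) (UB' : Matrix (Fin dB) (Fin c) ℝ)
    (hA : ∀ i j, 0 < w i j → UA'ᵀ.mulVec (fun r => XA r i - XA r j) ≠ 0)
    (hB : ∀ i j, 0 < w i j → UB'ᵀ.mulVec (fun r => XB r i - XB r j) ≠ 0)
    (hq : ∀ i, UA'ᵀ.mulVec (fun r => XA r i) - UB'ᵀ.mulVec (fun r => XB r i) ≠ 0) :
    ∀ (UA : Matrix (Fin dA) (Fin c) ℝ) (UB : Matrix (Fin dB) (Fin c) ℝ),
      Jobj XA XB Y w lam1 lam2 UA' UB' UA UB ≤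
        Jobj XA XB Y w lam1 lam2 UA' UB' UA' UB' →
      Fobj XA XB Y w lam1 lam2 UA UB ≤ Fobj XA XB Y w lam1 lam2 UA' UB' := by
  intro UA UB hJ
  have eA := sum_sum_weighted_sub_le
    (a := fun i j => eNorm (UAᵀ.mulVec (fun r => XA r i - XA r j)))
    hw (fun i j h => eNorm_pos (hA i j h))
  have eB := sum_sum_weighted_sub_le
    (a := fun i j => eNorm (UBᵀ.mulVec (fun r => XB r i - XB r j)))
    hw (fun i j h => eNorm_pos (hB i j h))
  have eQ := sum_weighted_sub_le (w := fun _ => (1 : ℝ))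
    (a := fun i => eNorm (UAᵀ.mulVec (fun r => XA r i) - UBᵀ.mulVec (fun r => XB r i)))
    (fun _ => zero_le_one) (fun i _ => eNorm_pos (hq i))
  simp only [one_mul] at eQ
  have m1 := mul_le_mul_of_nonneg_left (add_le_add eA eB) h1
  have m2 := mul_le_mul_of_nonneg_left eQ h2
  unfold Jobj at hJ
  unfold Fobj
  linarith
end

section
/- Let X ∈ ℝ^{d×n}, Y ∈ ℝ^{n×c}, B ∈ ℝ^{n×c}, let L ∈ ℝ^{n×n} be symmetric positive semidefinite, let Q ∈ ℝ^{n×n} be diagonal with nonnegative diagonal entries, and let λ₁, λ₂ ≥ 0. Define g(U) = ‖XᵀU − Y‖_F² + λ₁·tr(UᵀX L XᵀU) + λ₂·tr((XᵀU − B)ᵀ Q (XᵀU − B)) for U ∈ ℝ^{d×c}. If the matrix M := X(I + λ₁L + λ₂Q)Xᵀ is invertible, then M is positive definite and U* = M⁻¹ X (Y + λ₂ Q B) is the unique global minimizer of g. -/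
/-!
With `N = 1 + λ₁ L + λ₂ Q`, the objective `g` is a quadratic function of `U` whose quadratic part
is `tr(Uᵀ M U)`, where `M = X N Xᵀ`. The proposed minimizer `U₀` solves the normal equations
`M U₀ = X (Y + λ₂ Q B)`, so the linear term of the expansion about `U₀` vanishes and
`g(U₀ + E) = g(U₀) + tr(Eᵀ M E)` (`objective_add`). Since `N` is positive semidefinite, so is `M`;
being invertible, `M` is positive definite. Hence `tr(Eᵀ M E)`, the sum of the values of the
quadratic form of `M` at the columns of `E`, is nonnegative and vanishes only at `E = 0`.
-/

open Matrix

lemma frobSq_eq_trace {n m : ℕ} (A : Matrix (Fin n) (Fin m) ℝ) :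
    frobSq A = trace (Aᵀ * A) := by
  rw [frobSq, Finset.sum_comm]
  simp [trace, mul_apply, pow_two]

/-- Expansion of the quadratic form `A ↦ tr(Aᵀ S A)` for symmetric `S`. -/
lemma trace_quad_add {n m : ℕ} {S : Matrix (Fin n) (Fin n) ℝ} (hS : Sᵀ = S)
    (A W : Matrix (Fin n) (Fin m) ℝ) :
    trace ((A + W)ᵀ * S * (A + W)) =
      trace (Aᵀ * S * A) + 2 * trace (Wᵀ * (S * A)) + trace (Wᵀ * S * W) := by
  have h : trace (Aᵀ * S * W) = trace (Wᵀ * (S * A)) := by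
    rw [← trace_transpose]
    simp [transpose_mul, hS]
  simp only [transpose_add, Matrix.add_mul, Matrix.mul_add, trace_add, Matrix.mul_assoc] at h ⊢
  rw [h]
  ring

lemma trace_quad_eq_sum {n m : ℕ} (S : Matrix (Fin n) (Fin n) ℝ)
    (E : Matrix (Fin n) (Fin m) ℝ) :
    trace (Eᵀ * S * E) = ∑ j, E.col j ⬝ᵥ (S *ᵥ E.col j) := by
  simp only [trace, diag_apply, Matrix.mul_assoc]
  rfl

lemma trace_quad_nonneg {n m : ℕ} {S : Matrix (Fin n) (Fin n) ℝ} (hS : S.PosDef)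
    (E : Matrix (Fin n) (Fin m) ℝ) : 0 ≤ trace (Eᵀ * S * E) := by
  rw [trace_quad_eq_sum]
  exact Finset.sum_nonneg fun j _ => by
    simpa using hS.posSemidef.dotProduct_mulVec_nonneg (E.col j)

lemma eq_zero_of_trace_quad_eq_zero {n m : ℕ} {S : Matrix (Fin n) (Fin n) ℝ} (hS : S.PosDef)
    {E : Matrix (Fin n) (Fin m) ℝ} (h : trace (Eᵀ * S * E) = 0) : E = 0 := by
  rw [trace_quad_eq_sum, Finset.sum_eq_zero_iff_of_nonneg fun j _ => by
    simpa using hS.posSemidef.dotProduct_mulVec_nonneg (E.col j)] at h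
  ext i j
  by_contra hij
  have hne : E.col j ≠ 0 := fun h0 => hij (congrFun h0 i)
  have hpos := hS.dotProduct_mulVec_pos hne
  rw [star_trivial, h j (Finset.mem_univ j)] at hpos
  exact lt_irrefl _ hpos

/-- Expansion of the objective about a solution `U₀` of the normal equations: there is no linear
term, and the quadratic term is `tr(Eᵀ M E)`. -/
lemma objective_add {d n c : ℕ} (X : Matrix (Fin d) (Fin n) ℝ)
    (Y B : Matrix (Fin n) (Fin c) ℝ) {L Q : Matrix (Fin n) (Fin n) ℝ}
    (hL : Lᵀ = L) (hQ : Qᵀ = Q) (a b : ℝ) (U₀ E : Matrix (Fin d) (Fin c) ℝ)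
    (hU : X * (1 + a • L + b • Q) * Xᵀ * U₀ = X * (Y + b • (Q * B))) :
    frobSq (Xᵀ * (U₀ + E) - Y) + a * trace ((U₀ + E)ᵀ * X * L * Xᵀ * (U₀ + E)) +
        b * trace ((Xᵀ * (U₀ + E) - B)ᵀ * Q * (Xᵀ * (U₀ + E) - B)) =
      (frobSq (Xᵀ * U₀ - Y) + a * trace (U₀ᵀ * X * L * Xᵀ * U₀) +
        b * trace ((Xᵀ * U₀ - B)ᵀ * Q * (Xᵀ * U₀ - B))) +
      trace (Eᵀ * (X * (1 + a • L + b • Q) * Xᵀ) * E) := by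
  have e1 : ∀ C : Matrix (Fin n) (Fin c) ℝ, Xᵀ * (U₀ + E) - C = (Xᵀ * U₀ - C) + Xᵀ * E := by
    intro C
    rw [Matrix.mul_add]
    abel
  have e2 : ∀ U : Matrix (Fin d) (Fin c) ℝ,
      Uᵀ * X * L * Xᵀ * U = (Xᵀ * U)ᵀ * L * (Xᵀ * U) := by
    intro U
    simp [transpose_mul, Matrix.mul_assoc]
  have f1 := trace_quad_add (transpose_one (n := Fin n) (α := ℝ)) (Xᵀ * U₀ - Y) (Xᵀ * E)
  have f2 := trace_quad_add hL (Xᵀ * U₀) (Xᵀ * E)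
  have f3 := trace_quad_add hQ (Xᵀ * U₀ - B) (Xᵀ * E)
  -- Half the linear term, i.e. the pairing of `E` with the residual of the normal equations.
  have hlin : trace ((Xᵀ * E)ᵀ * (Xᵀ * U₀ - Y)) + a * trace ((Xᵀ * E)ᵀ * (L * (Xᵀ * U₀))) +
      b * trace ((Xᵀ * E)ᵀ * (Q * (Xᵀ * U₀ - B))) = 0 := by
    have h := congrArg (fun Z => trace (Eᵀ * Z)) hU
    simp only [transpose_mul, transpose_transpose, Matrix.mul_add, Matrix.add_mul, Matrix.mul_sub,
      Matrix.mul_one, Matrix.mul_smul, Matrix.smul_mul, trace_add, trace_sub,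
      trace_smul, smul_eq_mul, Matrix.mul_assoc] at h ⊢
    linarith
  have hquad : trace (Eᵀ * (X * (1 + a • L + b • Q) * Xᵀ) * E) =
      trace ((Xᵀ * E)ᵀ * (Xᵀ * E)) + a * trace ((Xᵀ * E)ᵀ * L * (Xᵀ * E)) +
        b * trace ((Xᵀ * E)ᵀ * Q * (Xᵀ * E)) := by
    simp only [transpose_mul, transpose_transpose, Matrix.mul_add, Matrix.add_mul,
      Matrix.mul_one, Matrix.mul_smul, Matrix.smul_mul, trace_add,
      trace_smul, smul_eq_mul, Matrix.mul_assoc]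
  rw [Matrix.mul_one, Matrix.mul_one, Matrix.mul_one, Matrix.one_mul] at f1
  rw [hquad, e2, e2, e1, e1, Matrix.mul_add, frobSq_eq_trace, frobSq_eq_trace, f1, f2, f3]
  linear_combination 2 * hlin

/-- Closed-form solution of the weighted quadratic subproblem of CMMp: with
`g(U) = ‖XᵀU − Y‖_F² + λ₁·tr(UᵀX L XᵀU) + λ₂·tr((XᵀU − B)ᵀ Q (XᵀU − B))`, `L` symmetric
PSD, `Q` diagonal with nonnegative entries and `M = X(I + λ₁L + λ₂Q)Xᵀ` invertible,
`M` is positive definite and `U* = M⁻¹ X (Y + λ₂ Q B)` is the unique global minimizer. -/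
theorem stmt_12 (d n c : ℕ) (X : Matrix (Fin d) (Fin n) ℝ)
    (Y B : Matrix (Fin n) (Fin c) ℝ) (L : Matrix (Fin n) (Fin n) ℝ)
    (hL : L.PosSemidef) (q : Fin n → ℝ) (hq : ∀ i, 0 ≤ q i)
    (lam1 lam2 : ℝ) (h1 : 0 ≤ lam1) (h2 : 0 ≤ lam2)
    (hM : IsUnit (X * (1 + lam1 • L + lam2 • Matrix.diagonal q) * Xᵀ)) :
    (X * (1 + lam1 • L + lam2 • Matrix.diagonal q) * Xᵀ).PosDef ∧
    (∀ U : Matrix (Fin d) (Fin c) ℝ,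
        (fun U' : Matrix (Fin d) (Fin c) ℝ =>
            frobSq (Xᵀ * U' - Y) + lam1 * Matrix.trace (U'ᵀ * X * L * Xᵀ * U') +
              lam2 * Matrix.trace
                ((Xᵀ * U' - B)ᵀ * Matrix.diagonal q * (Xᵀ * U' - B)))
          ((X * (1 + lam1 • L + lam2 • Matrix.diagonal q) * Xᵀ)⁻¹ * X *
            (Y + lam2 • (Matrix.diagonal q * B))) ≤
        frobSq (Xᵀ * U - Y) + lam1 * Matrix.trace (Uᵀ * X * L * Xᵀ * U) +
          lam2 * Matrix.trace
            ((Xᵀ * U - B)ᵀ * Matrix.diagonal q * (Xᵀ * U - B))) ∧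
    (∀ U : Matrix (Fin d) (Fin c) ℝ,
        frobSq (Xᵀ * U - Y) + lam1 * Matrix.trace (Uᵀ * X * L * Xᵀ * U) +
            lam2 * Matrix.trace
              ((Xᵀ * U - B)ᵀ * Matrix.diagonal q * (Xᵀ * U - B)) =
          (fun U' : Matrix (Fin d) (Fin c) ℝ =>
              frobSq (Xᵀ * U' - Y) + lam1 * Matrix.trace (U'ᵀ * X * L * Xᵀ * U') +
                lam2 * Matrix.trace
                  ((Xᵀ * U' - B)ᵀ * Matrix.diagonal q * (Xᵀ * U' - B)))
            ((X * (1 + lam1 • L + lam2 • Matrix.diagonal q) * Xᵀ)⁻¹ * X *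
              (Y + lam2 • (Matrix.diagonal q * B))) →
        U = (X * (1 + lam1 • L + lam2 • Matrix.diagonal q) * Xᵀ)⁻¹ * X *
              (Y + lam2 • (Matrix.diagonal q * B))) := by
  have hN : (1 + lam1 • L + lam2 • Matrix.diagonal q).PosSemidef :=
    (PosSemidef.one.add (hL.smul h1)).add ((PosSemidef.diagonal hq).smul h2)
  have hPSD : (X * (1 + lam1 • L + lam2 • Matrix.diagonal q) * Xᵀ).PosSemidef := by
    simpa using hN.mul_mul_conjTranspose_same X
  have hPD := hPSD.posDef_iff_isUnit.mpr hM
  have hLs : Lᵀ = L := by simpa using hL.isHermitian.eq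
  have key := objective_add X Y B hLs (diagonal_transpose q) lam1 lam2
    ((X * (1 + lam1 • L + lam2 • Matrix.diagonal q) * Xᵀ)⁻¹ * X *
      (Y + lam2 • (Matrix.diagonal q * B)))
  set M := X * (1 + lam1 • L + lam2 • Matrix.diagonal q) * Xᵀ with hMdef
  set U₀ := M⁻¹ * X * (Y + lam2 • (Matrix.diagonal q * B)) with hU₀
  have hnormal : M * U₀ = X * (Y + lam2 • (Matrix.diagonal q * B)) := by
    rw [hU₀, Matrix.mul_assoc M⁻¹, mul_nonsing_inv_cancel_left _ _ ((isUnit_iff_isUnit_det M).mp hM)]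
  refine ⟨hPD, fun U => ?_, fun U hU => ?_⟩
  · have h := key (U - U₀) hnormal
    rw [add_sub_cancel] at h
    have h' := trace_quad_nonneg hPD (U - U₀)
    simp only
    linarith
  · have h := key (U - U₀) hnormal
    rw [add_sub_cancel] at h
    simp only at hU
    exact sub_eq_zero.mp (eq_zero_of_trace_quad_eq_zero hPD (by linarith))
end
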